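/- For every timed automaton A there exists a diagonal-free timed automaton A_df (over the same clock set) such that there is a bijection between the runs of A and the runs of A_df that maps accepting runs to accepting runs (so A has an accepting run iff A_df does), and the number of states of A_df is 2^d · n, where d is the number of distinct diagonal constraints occurring in the guards of A and n is the number of states of A. -/

import Mathlib

open scoped NNReal

/-! ## Atomic constraints over a set of clocks -/

/-- Comparison operator `◁ ∈ {<, ≤}`. -/
inductive Ineq : Type where
  | lt : Ineq
  | le : Ineq
deriving DecidableEq

/-- Interpretation of a comparison operator on reals. -/
def Ineq.holds : Ineq → ℝ → ℝ → Prop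
  | .lt, a, b => a < b
  | .le, a, b => a ≤ b

/-- Atomic constraints over clocks `X`:
`upper x o c` is `x ◁ c` (c ∈ ℕ), `lower c o x` is `c ◁ x` (c ∈ ℕ),
`diag x y o d` is `x - y ◁ d` (d ∈ ℤ). -/
inductive Constr (X : Type) : Type where
  | upper : X → Ineq → ℕ → Constr X
  | lower : ℕ → Ineq → X → Constr X
  | diag : X → X → Ineq → ℤ → Constr X
deriving DecidableEq

namespace Constr

/-- Is the constraint a diagonal constraint `x - y ◁ d`? -/
def isDiag {X : Type} : Constr X → Bool
  | .diag _ _ _ _ => true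
  | _ => false

/-- The integer constant of a constraint. -/
def constOf {X : Type} : Constr X → ℤ
  | .upper _ _ c => (c : ℤ)
  | .lower c _ _ => (c : ℤ)
  | .diag _ _ _ d => d

/-- Satisfaction of a constraint by a clock valuation `v : X → ℝ≥0`. -/
def sat {X : Type} (v : X → ℝ≥0) : Constr X → Prop
  | .upper x o c => o.holds (v x : ℝ) (c : ℝ)
  | .lower c o x => o.holds (c : ℝ) (v x : ℝ)
  | .diag x y o d => o.holds ((v x : ℝ) - (v y : ℝ)) (d : ℝ)

end Constr

/-- Time elapse: `v + δ`. -/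
def shift {X : Type} (v : X → ℝ≥0) (δ : ℝ≥0) : X → ℝ≥0 := fun x => v x + δ

/-- The relation `v ⊑_G v'`: for all `φ ∈ G` and all delays `δ ≥ 0`,
`v + δ ⊨ φ` implies `v' + δ ⊨ φ`. -/
def simG {X : Type} (G : Set (Constr X)) (v v' : X → ℝ≥0) : Prop :=
  ∀ φ ∈ G, ∀ δ : ℝ≥0, Constr.sat (shift v δ) φ → Constr.sat (shift v' δ) φ

/-- `Z ⊑_G Z'` on sets of valuations. -/
def simGZ {X : Type} (G : Set (Constr X)) (Z Z' : Set (X → ℝ≥0)) : Prop :=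
  ∀ v ∈ Z, ∃ v' ∈ Z', simG G v v'

open Classical in
/-- `[R]v`: reset the clocks in `R` to `0`. -/
noncomputable def reset {X : Type} (R : Set X) (v : X → ℝ≥0) : X → ℝ≥0 :=
  fun x => if x ∈ R then 0 else v x

/-- Weakest precondition `wp(⊑_φ, R)` of a single constraint over a reset. -/
def wpReset {X : Type} (R : Set X) : Constr X → Set (Constr X)
  | .upper x o c => {ψ | x ∉ R ∧ ψ = .upper x o c}
  | .lower c o x => {ψ | x ∉ R ∧ ψ = .lower c o x}
  | .diag x y o d =>
      {ψ | (x ∉ R ∧ y ∉ R ∧ ψ = .diag x y o d) ∨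
           (x ∉ R ∧ y ∈ R ∧ 0 ≤ d ∧ ψ = .upper x o d.toNat) ∨
           (x ∈ R ∧ y ∉ R ∧ 0 ≤ -d ∧ ψ = .lower (-d).toNat o y)}

/-- Weakest precondition `wp(⊑_G, R)` of a set of constraints over a reset. -/
def wpResetSet {X : Type} (R : Set X) (G : Set (Constr X)) : Set (Constr X) :=
  ⋃ φ ∈ G, wpReset R φ

/-! ## Timed automata -/

/-- A transition: source state, guard (finite conjunction of constraints),
reset set, target state. -/
abbrev TTrans (Q X : Type) : Type := Q × Finset (Constr X) × Set X × Q

def TTrans.src {Q X : Type} (t : TTrans Q X) : Q := t.1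
def TTrans.grd {Q X : Type} (t : TTrans Q X) : Finset (Constr X) := t.2.1
def TTrans.rst {Q X : Type} (t : TTrans Q X) : Set X := t.2.2.1
def TTrans.tgt {Q X : Type} (t : TTrans Q X) : Q := t.2.2.2

/-- A timed automaton. -/
structure TA (Q X : Type) : Type where
  init : Q
  trans : Finset (TTrans Q X)
  acc : Set Q

/-- Action step of a timed automaton along transition `t`. -/
def Step {Q X : Type} (A : TA Q X) (t : TTrans Q X) (c c' : Q × (X → ℝ≥0)) : Prop :=
  t ∈ A.trans ∧ TTrans.src t = c.1 ∧ (∀ φ ∈ TTrans.grd t, Constr.sat c.2 φ) ∧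
    c'.1 = TTrans.tgt t ∧ c'.2 = reset (TTrans.rst t) c.2

/-- `r` is a simulation on the configurations of `A`: a reflexive transitive
relation, relating only configurations with equal states, compatible with
delays and action transitions. -/
def IsSimulation {Q X : Type} (A : TA Q X)
    (r : (Q × (X → ℝ≥0)) → (Q × (X → ℝ≥0)) → Prop) : Prop :=
  Reflexive r ∧ Transitive r ∧
  ∀ q v q' v', r (q, v) (q', v') →
    q = q' ∧
    (∀ δ : ℝ≥0, ∃ δ' : ℝ≥0, r (q, shift v δ) (q, shift v' δ')) ∧
    (∀ t c₁, Step A t (q, v) c₁ →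
      ∃ v₁', Step A t (q, v') (c₁.1, v₁') ∧ r c₁ (c₁.1, v₁'))

/-- The state-based guard equations:
`G(q) = ⋃_{(q,g,R,q₁) ∈ T} ({g} ∪ wp(⊑_{G(q₁)}, R))`. -/
def GuardEq {Q X : Type} (A : TA Q X) (G : Q → Set (Constr X)) : Prop :=
  ∀ q, G q = ⋃ t ∈ A.trans, ⋃ (_ : TTrans.src t = q),
    ((TTrans.grd t : Set (Constr X)) ∪ wpResetSet (TTrans.rst t) (G (TTrans.tgt t)))

/-! ## LU bounds -/

def lowerConstAt {X : Type} [DecidableEq X] (x : X) : Constr X → WithBot ℕ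
  | .lower c _ y => if y = x then (c : WithBot ℕ) else ⊥
  | _ => ⊥

def upperConstAt {X : Type} [DecidableEq X] (x : X) : Constr X → WithBot ℕ
  | .upper y _ c => if y = x then (c : WithBot ℕ) else ⊥
  | _ => ⊥

/-- `L_G(x)`: maximum constant among lower-bound constraints `c ◁ x` in `G`
(`⊥ = -∞` if none). -/
def Lbound {X : Type} [DecidableEq X] (G : Finset (Constr X)) (x : X) : WithBot ℕ :=
  G.sup (lowerConstAt x)

/-- `U_G(x)`: maximum constant among upper-bound constraints `x ◁ c` in `G`
(`⊥ = -∞` if none). -/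
def Ubound {X : Type} [DecidableEq X] (G : Finset (Constr X)) (x : X) : WithBot ℕ :=
  G.sup (upperConstAt x)

/-- The LU simulation `v ≼_LU v'` for bounds functions `L U : X → ℕ ∪ {-∞}`. -/
def luSim {X : Type} (L U : X → WithBot ℕ) (v v' : X → ℝ≥0) : Prop :=
  ∀ x : X,
    (v' x < v x → (L x).map (fun c : ℕ => (c : ℝ)) < ((v' x : ℝ) : WithBot ℝ)) ∧
    (v x < v' x → (U x).map (fun c : ℕ => (c : ℝ)) < ((v x : ℝ) : WithBot ℝ))

/-- The relation `v ⊑^LU_G v'`: `v ≼_{LU(G)} v'` and every diagonal constraint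
of `G` satisfied by `v` is satisfied by `v'`. -/
def luglu {X : Type} [DecidableEq X] (G : Finset (Constr X)) (v v' : X → ℝ≥0) : Prop :=
  luSim (Lbound G) (Ubound G) v v' ∧
    ∀ φ ∈ G, φ.isDiag → Constr.sat v φ → Constr.sat v' φ

/-- Lifting a relation on valuations to sets of valuations. -/
def zoneRel {X : Type} (r : (X → ℝ≥0) → (X → ℝ≥0) → Prop) (Z Z' : Set (X → ℝ≥0)) : Prop :=
  ∀ v ∈ Z, ∃ v' ∈ Z', r v v'

/-! ## Runs of timed automata -/

/-- `stepsFrom A c l`: the alternating delay-action sequence `l` is a valid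
sequence of steps of `A` starting at configuration `c`. -/
def stepsFrom {Q X : Type} (A : TA Q X) :
    (Q × (X → ℝ≥0)) → List (ℝ≥0 × TTrans Q X) → Prop
  | _, [] => True
  | c, (δ, t) :: l =>
      t ∈ A.trans ∧ TTrans.src t = c.1 ∧
      (∀ φ ∈ TTrans.grd t, Constr.sat (shift c.2 δ) φ) ∧
      stepsFrom A (TTrans.tgt t, reset (TTrans.rst t) (shift c.2 δ)) l

/-- Configuration reached after a sequence of delay-action steps. -/
noncomputable def endConfig {Q X : Type} :
    (Q × (X → ℝ≥0)) → List (ℝ≥0 × TTrans Q X) → (Q × (X → ℝ≥0))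
  | c, [] => c
  | c, (δ, t) :: l => endConfig (TTrans.tgt t, reset (TTrans.rst t) (shift c.2 δ)) l

/-- A run of `A`: a valid sequence of delay-action steps from `(q₀, 0̄)`. -/
def TA.Run {Q X : Type} (A : TA Q X) : Type :=
  {l : List (ℝ≥0 × TTrans Q X) // stepsFrom A (A.init, fun _ => 0) l}

/-- A run is accepting if it ends in an accepting state. -/
def TA.Accepting {Q X : Type} (A : TA Q X) (r : A.Run) : Prop :=
  (endConfig (A.init, fun _ => 0) r.val).1 ∈ A.acc

/-- `A` is diagonal-free: no guard contains a diagonal constraint. -/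
def DiagFree {Q X : Type} (A : TA Q X) : Prop :=
  ∀ t ∈ A.trans, ∀ φ ∈ TTrans.grd t, ¬ φ.isDiag

/-- The (finite) set of diagonal constraints occurring in guards of `A`. -/
def diagGuards {Q X : Type} [DecidableEq X] (A : TA Q X) : Finset (Constr X) :=
  A.trans.biUnion fun t => (TTrans.grd t).filter fun φ => φ.isDiag

/-! ## Updateable timed automata -/

/-- Atomic update of a clock: `x := c` or `x := y + d`. -/
inductive AtomicUp (X : Type) : Type where
  | const : ℕ → AtomicUp X
  | add : X → ℤ → AtomicUp X
deriving DecidableEq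

/-- `up(v) : X → ℝ` (may be negative). -/
def applyUpd {X : Type} (up : X → AtomicUp X) (v : X → ℝ≥0) : X → ℝ :=
  fun x => match up x with
    | .const c => (c : ℝ)
    | .add y d => (v y : ℝ) + (d : ℝ)

/-- Weakest precondition `wp(⊑_φ, up)` of a single constraint over an update. -/
def wpUpd {X : Type} [DecidableEq X] (up : X → AtomicUp X) : Constr X → Set (Constr X)
  | .upper x o c =>
      match up x with
      | .const _ => ∅
      | .add y d => if 0 ≤ (c : ℤ) - d then {Constr.upper y o ((c : ℤ) - d).toNat} else ∅
  | .lower c o x =>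
      match up x with
      | .const _ => ∅
      | .add y d => if 0 ≤ (c : ℤ) - d then {Constr.lower ((c : ℤ) - d).toNat o y} else ∅
  | .diag x y o c =>
      match up x, up y with
      | .const _, .const _ => ∅
      | .add y₁ d₁, .const c₂ =>
          if 0 ≤ c + (c₂ : ℤ) - d₁ then {Constr.upper y₁ o (c + (c₂ : ℤ) - d₁).toNat} else ∅
      | .const c₁, .add y₂ d₂ =>
          if 0 ≤ (c₁ : ℤ) - d₂ - c then {Constr.lower ((c₁ : ℤ) - d₂ - c).toNat o y₂} else ∅
      | .add y₁ d₁, .add y₂ d₂ =>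
          if y₁ = y₂ then ∅ else {Constr.diag y₁ y₂ o (c - d₁ + d₂)}

/-- Weakest precondition `wp(⊑_G, up)` of a set of constraints over an update. -/
def wpUpdSet {X : Type} [DecidableEq X] (up : X → AtomicUp X) (G : Set (Constr X)) :
    Set (Constr X) :=
  ⋃ φ ∈ G, wpUpd up φ

/-- The set of constraints `{0 ≤ x | x ∈ X}`. -/
def nonnegConstrs (X : Type) : Set (Constr X) := {φ | ∃ x : X, φ = Constr.lower 0 Ineq.le x}

/-- A transition of an updateable timed automaton: source, guard, update, target. -/
abbrev UTrans (Q X : Type) : Type := Q × Finset (Constr X) × (X → AtomicUp X) × Q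

def UTrans.src {Q X : Type} (t : UTrans Q X) : Q := t.1
def UTrans.grd {Q X : Type} (t : UTrans Q X) : Finset (Constr X) := t.2.1
def UTrans.upd {Q X : Type} (t : UTrans Q X) : X → AtomicUp X := t.2.2.1
def UTrans.tgt {Q X : Type} (t : UTrans Q X) : Q := t.2.2.2

/-- An updateable timed automaton. -/
structure UTA (Q X : Type) : Type where
  init : Q
  trans : Finset (UTrans Q X)
  acc : Set Q

/-- Action step of an updateable timed automaton along transition `t`:
the guard holds, `up(v) ≥ 0`, and the new valuation is `up(v)`. -/
def UStep {Q X : Type} (A : UTA Q X) (t : UTrans Q X) (c c' : Q × (X → ℝ≥0)) : Prop :=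
  t ∈ A.trans ∧ UTrans.src t = c.1 ∧ (∀ φ ∈ UTrans.grd t, Constr.sat c.2 φ) ∧
    c'.1 = UTrans.tgt t ∧ ∀ x, (c'.2 x : ℝ) = applyUpd (UTrans.upd t) c.2 x

/-- `r` is a simulation on configurations of an updateable timed automaton. -/
def IsSimulationU {Q X : Type} (A : UTA Q X)
    (r : (Q × (X → ℝ≥0)) → (Q × (X → ℝ≥0)) → Prop) : Prop :=
  Reflexive r ∧ Transitive r ∧
  ∀ q v q' v', r (q, v) (q', v') →
    q = q' ∧
    (∀ δ : ℝ≥0, ∃ δ' : ℝ≥0, r (q, shift v δ) (q, shift v' δ')) ∧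
    (∀ t c₁, UStep A t (q, v) c₁ →
      ∃ v₁', UStep A t (q, v') (c₁.1, v₁') ∧ r c₁ (c₁.1, v₁'))

/-- State-based guard equations for updateable timed automata. -/
def GuardEqU {Q X : Type} [DecidableEq X] (A : UTA Q X) (G : Q → Set (Constr X)) : Prop :=
  ∀ q, G q = ⋃ t ∈ A.trans, ⋃ (_ : UTrans.src t = q),
    ((UTrans.grd t : Set (Constr X)) ∪ wpUpdSet (UTrans.upd t) (nonnegConstrs X)
      ∪ wpUpdSet (UTrans.upd t) (G (UTrans.tgt t)))

/-- Kleene iterates `G^i(q)` of the state-based guard equations. -/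
def iterG {Q X : Type} [DecidableEq X] (A : UTA Q X) : ℕ → Q → Set (Constr X)
  | 0 => fun q => ⋃ t ∈ A.trans, ⋃ (_ : UTrans.src t = q),
      ((UTrans.grd t : Set (Constr X)) ∪ wpUpdSet (UTrans.upd t) (nonnegConstrs X))
  | (i + 1) => fun q => iterG A i q ∪
      (⋃ t ∈ A.trans, ⋃ (_ : UTrans.src t = q),
        wpUpdSet (UTrans.upd t) (iterG A i (UTrans.tgt t)))

/-- `G^{i+1}(q)` is coloured red: a new diagonal constraint was added, or a new
non-diagonal constraint whose constant is strictly bigger than the constant of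
every non-diagonal constraint of the same kind on the same clock in `G^i(q)`. -/
def RedAt {Q X : Type} [DecidableEq X] (A : UTA Q X) : ℕ → Q → Prop
  | 0, _ => False
  | (i + 1), q =>
      (∃ φ : Constr X, φ ∈ iterG A (i + 1) q ∧ φ ∉ iterG A i q ∧ φ.isDiag) ∨
      (∃ (x : X) (o : Ineq) (c : ℕ),
        Constr.upper x o c ∈ iterG A (i + 1) q ∧ Constr.upper x o c ∉ iterG A i q ∧
        ∀ (o' : Ineq) (c' : ℕ), Constr.upper x o' c' ∈ iterG A i q → c' < c) ∨
      (∃ (x : X) (o : Ineq) (c : ℕ),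
        Constr.lower c o x ∈ iterG A (i + 1) q ∧ Constr.lower c o x ∉ iterG A i q ∧
        ∀ (o' : Ineq) (c' : ℕ), Constr.lower c' o' x ∈ iterG A i q → c' < c)

/-- `G^i(q)` is coloured green. -/
def GreenAt {Q X : Type} [DecidableEq X] (A : UTA Q X) (i : ℕ) (q : Q) : Prop :=
  ¬ RedAt A i q

/-- Absolute value of the constant of an atomic update. -/
def updBound {X : Type} : AtomicUp X → ℕ
  | .const c => c
  | .add _ d => d.natAbs

/-! ## The statement -/


namespace DF

theorem exists_neg {X : Type} (ψ : Constr X) (h : ¬ ψ.isDiag) :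
    ∃ ψ' : Constr X, ¬ ψ'.isDiag ∧ ∀ v, Constr.sat v ψ' ↔ ¬ Constr.sat v ψ := by
  match ψ with
  | .upper x .lt c => exact ⟨.lower c .le x, by simp [Constr.isDiag], by simp [Constr.sat, Ineq.holds]⟩
  | .upper x .le c => exact ⟨.lower c .lt x, by simp [Constr.isDiag], by simp [Constr.sat, Ineq.holds]⟩
  | .lower c .lt x => exact ⟨.upper x .le c, by simp [Constr.isDiag], by simp [Constr.sat, Ineq.holds]⟩
  | .lower c .le x => exact ⟨.upper x .lt c, by simp [Constr.isDiag], by simp [Constr.sat, Ineq.holds]⟩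
  | .diag _ _ _ _ => simp [Constr.isDiag] at h

theorem wp_cases {X : Type} (φ : Constr X) (h : φ.isDiag) (R : Set X) :
    (∀ v, Constr.sat (reset R v) φ ↔ Constr.sat v φ) ∨
    (∃ p : Prop, ∀ v, Constr.sat (reset R v) φ ↔ p) ∨
    (∃ ψ : Constr X, ¬ ψ.isDiag ∧ ∀ v, Constr.sat (reset R v) φ ↔ Constr.sat v ψ) := by
  match φ with
  | .upper _ _ _ => simp [Constr.isDiag] at h
  | .lower _ _ _ => simp [Constr.isDiag] at h
  | .diag x y o d =>
    by_cases hx : x ∈ R <;> by_cases hy : y ∈ R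
    · right; left
      exact ⟨o.holds 0 d, fun v => by simp [Constr.sat, reset, hx, hy]⟩
    · right
      by_cases hd : d ≤ 0
      · right
        obtain ⟨n, rfl⟩ : ∃ n : ℕ, d = -(n : ℤ) := ⟨(-d).toNat, by omega⟩
        refine ⟨.lower n o y, by simp [Constr.isDiag], fun v => ?_⟩
        cases o <;> simp [Constr.sat, reset, hx, hy, Ineq.holds]
      · left
        have hd' : (0 : ℝ) < d := by exact_mod_cast not_le.mp hd
        refine ⟨True, fun v => ?_⟩
        have := (v y).2
        have h0 : (0:ℝ) ≤ v y := this
        cases o <;> simp [Constr.sat, reset, hx, hy, Ineq.holds] <;> linarith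
    · right
      by_cases hd : 0 ≤ d
      · right
        obtain ⟨n, rfl⟩ : ∃ n : ℕ, d = (n : ℤ) := ⟨d.toNat, by omega⟩
        refine ⟨.upper x o n, by simp [Constr.isDiag], fun v => ?_⟩
        cases o <;> simp [Constr.sat, reset, hx, hy, Ineq.holds]
      · left
        have hd' : (d : ℝ) < 0 := by exact_mod_cast not_le.mp hd
        refine ⟨False, fun v => ?_⟩
        have h0 : (0:ℝ) ≤ v x := (v x).2
        cases o <;> simp [Constr.sat, reset, hx, hy, Ineq.holds] <;> linarith
    · left
      intro v
      simp [Constr.sat, reset, hx, hy]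

theorem sat_shift {X : Type} (φ : Constr X) (h : φ.isDiag) (v : X → ℝ≥0) (δ : ℝ≥0) :
    Constr.sat (shift v δ) φ ↔ Constr.sat v φ := by
  match φ with
  | .upper _ _ _ => simp [Constr.isDiag] at h
  | .lower _ _ _ => simp [Constr.isDiag] at h
  | .diag x y o d => simp [Constr.sat, shift]

/-- a non-diagonal guard deciding that a proposition holds -/
theorem const_guard {X : Type} (x₀ : X) (p : Prop) :
    ∃ g : Finset (Constr X), (∀ ψ ∈ g, ¬ ψ.isDiag) ∧
      ∀ v, (∀ ψ ∈ g, Constr.sat v ψ) ↔ p := by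
  by_cases hp : p
  · exact ⟨∅, by simp, by simp [hp]⟩
  · refine ⟨{.upper x₀ .lt 0}, by simp [Constr.isDiag], fun v => ?_⟩
    have h0 : (0:ℝ) ≤ v x₀ := (v x₀).2
    simp [hp, Constr.sat, Ineq.holds]

theorem one_guard {X : Type} (x₀ : X) (φ : Constr X) (h : φ.isDiag) (R : Set X) (s b : Prop) :
    ∃ g : Finset (Constr X), (∀ ψ ∈ g, ¬ ψ.isDiag) ∧
      ∀ v, (Constr.sat v φ ↔ s) →
        ((∀ ψ ∈ g, Constr.sat v ψ) ↔ (Constr.sat (reset R v) φ ↔ b)) := by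
  rcases wp_cases φ h R with h1 | ⟨p, h1⟩ | ⟨ψ, hψ, h1⟩
  · obtain ⟨g, hg, hg'⟩ := const_guard x₀ (s ↔ b)
    exact ⟨g, hg, fun v hv => by rw [hg', h1, hv]⟩
  · obtain ⟨g, hg, hg'⟩ := const_guard x₀ (p ↔ b)
    exact ⟨g, hg, fun v hv => by rw [hg', h1]⟩
  · by_cases hb : b
    · exact ⟨{ψ}, by simpa using hψ, fun v _ => by simp [h1, hb]⟩
    · obtain ⟨ψ', hψ', h2⟩ := exists_neg ψ hψ
      exact ⟨{ψ'}, by simpa using hψ', fun v _ => by simp [h1, hb, h2]⟩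

theorem base_guard {Q X : Type} [DecidableEq X] (A : TA Q X) (x₀ : X) (t : TTrans Q X)
    (S S' : Set {φ // φ ∈ diagGuards A}) :
    ∃ g : Finset (Constr X), t ∈ A.trans → (∀ ψ ∈ g, ¬ ψ.isDiag) ∧
      ∀ v, (∀ φ, Constr.sat v φ.1 ↔ φ ∈ S) →
        ((∀ ψ ∈ g, Constr.sat v ψ) ↔
          ((∀ φ ∈ TTrans.grd t, Constr.sat v φ) ∧
            ∀ φ, Constr.sat (reset (TTrans.rst t) v) φ.1 ↔ φ ∈ S')) := by
  have hD : ∀ φ ∈ diagGuards A, φ.isDiag := by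
    intro φ hφ
    simp only [diagGuards, Finset.mem_biUnion, Finset.mem_filter] at hφ
    obtain ⟨_, _, _, h⟩ := hφ
    exact h
  choose G hG hG' using fun φ : {φ // φ ∈ diagGuards A} =>
    one_guard x₀ φ.1 (hD _ φ.2) (TTrans.rst t) (φ ∈ S) (φ ∈ S')
  obtain ⟨c, hc, hc'⟩ := const_guard x₀ (∀ φ : {φ // φ ∈ diagGuards A}, φ.1 ∈ TTrans.grd t → φ ∈ S)
  refine ⟨((TTrans.grd t).filter fun φ => ¬ φ.isDiag) ∪ c ∪ Finset.univ.biUnion G, fun ht => ⟨?_, ?_⟩⟩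
  · intro ψ hψ
    simp only [Finset.mem_union, Finset.mem_filter, Finset.mem_biUnion, Finset.mem_univ, true_and] at hψ
    rcases hψ with (h | h) | ⟨φ, h⟩
    · exact h.2
    · exact hc _ h
    · exact hG _ _ h
  · intro v hv
    have key : (∀ φ, Constr.sat (reset (TTrans.rst t) v) φ.1 ↔ φ ∈ S') ↔
        ∀ φ, ∀ ψ ∈ G φ, Constr.sat v ψ := forall_congr' fun φ => (hG' φ v (hv φ)).symm
    rw [key]
    have hcv := hc' v
    constructor
    · intro H
      have Hc : ∀ φ : {φ // φ ∈ diagGuards A}, φ.1 ∈ TTrans.grd t → φ ∈ S := by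
        rw [← hcv]
        intro ψ hψ
        exact H ψ (by simp [hψ])
      refine ⟨fun φ hφ => ?_, fun φ ψ hψ => H ψ ?_⟩
      · by_cases hd : φ.isDiag
        · have hm : φ ∈ diagGuards A := by
            simp only [diagGuards, Finset.mem_biUnion, Finset.mem_filter]
            exact ⟨t, ht, hφ, hd⟩
          exact (hv ⟨φ, hm⟩).2 (Hc ⟨φ, hm⟩ hφ)
        · exact H φ (by
            simp only [Finset.mem_union, Finset.mem_filter]
            exact Or.inl (Or.inl ⟨hφ, hd⟩))
      · simp only [Finset.mem_union, Finset.mem_biUnion, Finset.mem_univ, true_and]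
        exact Or.inr ⟨φ, hψ⟩
    · rintro ⟨H1, H2⟩ ψ hψ
      simp only [Finset.mem_union, Finset.mem_filter, Finset.mem_biUnion, Finset.mem_univ, true_and] at hψ
      rcases hψ with (h | h) | ⟨φ, h⟩
      · exact H1 _ h.1
      · exact hcv.2 (fun φ hφ => (hv φ).1 (H1 _ hφ)) _ h
      · exact H2 φ ψ h

/-- The tag constraint. -/
def tagC {X : Type} (x₀ : X) (n : ℕ) : Bool → Constr X
  | true => .upper x₀ .le n
  | false => .lower n .lt x₀

theorem tagC_sat {X : Type} (x₀ : X) (n : ℕ) (b : Bool) (v : X → ℝ≥0) :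
    Constr.sat v (tagC x₀ n b) ↔ (b = true ↔ (v x₀ : ℝ) ≤ n) := by
  cases b <;> simp [tagC, Constr.sat, Ineq.holds]

theorem tagC_const {X : Type} (x₀ : X) (n : ℕ) (b : Bool) :
    (tagC x₀ n b).constOf.toNat = n := by
  cases b <;> simp [tagC, Constr.constOf]

theorem tagC_isDiag {X : Type} (x₀ : X) (n : ℕ) (b : Bool) : ¬ (tagC x₀ n b).isDiag := by
  cases b <;> simp [tagC, Constr.isDiag]

theorem exists_tags {Q X : Type} (T : Finset (TTrans Q X)) (x₀ : X) (U : Set (Constr X))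
    (hU : U.Finite) :
    ∃ f : TTrans Q X → ℕ, Set.InjOn f T ∧ ∀ t b, tagC x₀ (f t) b ∉ U := by
  classical
  obtain ⟨N, hN⟩ := (hU.image fun φ => φ.constOf.toNat).bddAbove
  obtain ⟨i, hi⟩ := exists_injective_nat {t // t ∈ T}
  refine ⟨fun t => N + 1 + if h : t ∈ T then i ⟨t, h⟩ else 0, ?_, ?_⟩
  · intro t ht t' ht' h
    simp only [Finset.mem_coe] at ht ht'
    simp only [ht, ht', dif_pos] at h
    have := hi (by omega : i ⟨t, ht⟩ = i ⟨t', ht'⟩)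
    simpa using this
  · intro t b h
    have := hN (Set.mem_image_of_mem _ h)
    simp only [tagC_const] at this
    omega

section
variable {Q X : Type} [DecidableEq X]

/-- the diagonal constraints of `A` satisfied by `v` -/
def st (A : TA Q X) (v : X → ℝ≥0) : Set {φ // φ ∈ diagGuards A} := {φ | Constr.sat v φ.1}

theorem st_shift (A : TA Q X) (v : X → ℝ≥0) (δ : ℝ≥0) : st A (shift v δ) = st A v := by
  ext φ
  have hφ := φ.2
  simp only [diagGuards, Finset.mem_biUnion, Finset.mem_filter] at hφ
  obtain ⟨_, _, _, h⟩ := hφ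
  exact sat_shift φ.1 h v δ

/-- the new transitions -/
def tr (A : TA Q X) (x₀ : X) (f : TTrans Q X → ℕ)
    (B : TTrans Q X → Set {φ // φ ∈ diagGuards A} → Set {φ // φ ∈ diagGuards A} → Finset (Constr X))
    (t : TTrans Q X) (S S' : Set {φ // φ ∈ diagGuards A}) (b : Bool) :
    TTrans (Q × Set {φ // φ ∈ diagGuards A}) X :=
  ((TTrans.src t, S), insert (tagC x₀ (f t) b) (B t S S'), TTrans.rst t, (TTrans.tgt t, S'))

open Classical in
/-- lifting of step sequences -/
noncomputable def lift (A : TA Q X) (x₀ : X) (f : TTrans Q X → ℕ)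
    (B : TTrans Q X → Set {φ // φ ∈ diagGuards A} → Set {φ // φ ∈ diagGuards A} → Finset (Constr X)) :
    (X → ℝ≥0) → List (ℝ≥0 × TTrans Q X) →
      List (ℝ≥0 × TTrans (Q × Set {φ // φ ∈ diagGuards A}) X)
  | _, [] => []
  | v, (δ, t) :: l =>
    (δ, tr A x₀ f B t (st A v) (st A (reset (TTrans.rst t) (shift v δ)))
      (decide ((shift v δ x₀ : ℝ) ≤ f t))) ::
      lift A x₀ f B (reset (TTrans.rst t) (shift v δ)) l

/-- the new automaton -/
noncomputable def dfA (A : TA Q X) (x₀ : X) (f : TTrans Q X → ℕ)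
    (B : TTrans Q X → Set {φ // φ ∈ diagGuards A} → Set {φ // φ ∈ diagGuards A} → Finset (Constr X)) :
    TA (Q × Set {φ // φ ∈ diagGuards A}) X where
  init := (A.init, st A fun _ => 0)
  trans := (Set.finite_range fun p : {t // t ∈ A.trans} × Set {φ // φ ∈ diagGuards A} ×
      Set {φ // φ ∈ diagGuards A} × Bool => tr A x₀ f B p.1.1 p.2.1 p.2.2.1 p.2.2.2).toFinset
  acc := {p | p.1 ∈ A.acc}

theorem mem_dfA (A : TA Q X) (x₀ : X) (f : TTrans Q X → ℕ)
    (B : TTrans Q X → Set {φ // φ ∈ diagGuards A} → Set {φ // φ ∈ diagGuards A} → Finset (Constr X))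
    (u) : u ∈ (dfA A x₀ f B).trans ↔ ∃ t ∈ A.trans, ∃ S S' b, u = tr A x₀ f B t S S' b := by
  simp only [dfA, Set.Finite.mem_toFinset, Set.mem_range]
  constructor
  · rintro ⟨⟨t, S, S', b⟩, h⟩
    exact ⟨t.1, t.2, S, S', b, h.symm⟩
  · rintro ⟨t, ht, S, S', b, h⟩
    exact ⟨(⟨t, ht⟩, S, S', b), h.symm⟩

theorem stmt_aux (A : TA Q X) (x₀ : X) :
    ∃ A' : TA (Q × Set {φ // φ ∈ diagGuards A}) X, DiagFree A' ∧
      ∃ e : A.Run ≃ A'.Run, ∀ r : A.Run, A.Accepting r ↔ A'.Accepting (e r) := by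
  classical
  choose B hB using base_guard A x₀
  obtain ⟨f, hf, hfU⟩ := exists_tags A.trans x₀
    (⋃ p : {t // t ∈ A.trans} × Set {φ // φ ∈ diagGuards A} × Set {φ // φ ∈ diagGuards A},
      (B p.1.1 p.2.1 p.2.2 : Set (Constr X)))
    (Set.finite_iUnion fun p => Finset.finite_toSet _)
  have hfresh : ∀ t' b, ∀ t ∈ A.trans, ∀ S S', tagC x₀ (f t') b ∉ B t S S' := by
    intro t' b t ht S S' h
    exact hfU t' b (Set.mem_iUnion.2 ⟨(⟨t, ht⟩, S, S'), h⟩)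
  have hinj : ∀ t ∈ A.trans, ∀ t' ∈ A.trans, ∀ S S' b S1 S1' b',
      tr A x₀ f B t S S' b = tr A x₀ f B t' S1 S1' b' → t = t' := by
    intro t ht t' ht' S S' b S1 S1' b' h
    have hg : insert (tagC x₀ (f t) b) (B t S S') = insert (tagC x₀ (f t') b') (B t' S1 S1') :=
      congrArg TTrans.grd h
    have hm : tagC x₀ (f t) b ∈ insert (tagC x₀ (f t') b') (B t' S1 S1') := by
      rw [← hg]; exact Finset.mem_insert_self _ _
    rcases Finset.mem_insert.1 hm with h1 | h1
    · have := congrArg (fun φ => φ.constOf.toNat) h1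
      simp only [tagC_const] at this
      exact hf ht ht' this
    · exact absurd h1 (hfresh _ _ _ ht' _ _)
  have hgrd : ∀ t ∈ A.trans, ∀ v δ S' b,
      (∀ φ ∈ TTrans.grd (tr A x₀ f B t (st A v) S' b), Constr.sat (shift v δ) φ) ↔
        ((∀ φ ∈ TTrans.grd t, Constr.sat (shift v δ) φ) ∧
          S' = st A (reset (TTrans.rst t) (shift v δ)) ∧
          b = decide ((shift v δ x₀ : ℝ) ≤ f t)) := by
    intro t ht v δ S' b
    have h1 := (hB t (st A v) S' ht).2 (shift v δ) (by
      intro φ; rw [← st_shift A v δ]; rfl)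
    have h2 : (∀ φ : {φ // φ ∈ diagGuards A}, Constr.sat (reset (TTrans.rst t) (shift v δ)) φ.1 ↔ φ ∈ S')
        ↔ S' = st A (reset (TTrans.rst t) (shift v δ)) := by
      rw [Set.ext_iff]
      exact forall_congr' fun φ => ⟨fun h => h.symm, fun h => h.symm⟩
    have h3 : (b = true ↔ (shift v δ x₀ : ℝ) ≤ f t) ↔ b = decide ((shift v δ x₀ : ℝ) ≤ f t) := by
      by_cases hh : (shift v δ x₀ : ℝ) ≤ f t <;> cases b <;> simp [hh]
    have h4 : TTrans.grd (tr A x₀ f B t (st A v) S' b)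
        = insert (tagC x₀ (f t) b) (B t (st A v) S') := rfl
    rw [h4, Finset.forall_mem_insert, tagC_sat, h3, h1, h2]
    tauto
  have hvalid : ∀ l q v, stepsFrom A (q, v) l →
      stepsFrom (dfA A x₀ f B) ((q, st A v), v) (lift A x₀ f B v l) := by
    intro l
    induction l with
    | nil => intro q v _; trivial
    | cons p l ih =>
      obtain ⟨δ, t⟩ := p
      rintro q v ⟨ht, hs, hg, hr⟩
      refine ⟨(mem_dfA A x₀ f B _).2 ⟨t, ht, _, _, _, rfl⟩, ?_, ?_, ih _ _ hr⟩
      · exact Prod.ext hs rfl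
      · exact (hgrd t ht v δ _ _).2 ⟨hg, rfl, rfl⟩
  have hinjl : ∀ l l' q v, stepsFrom A (q, v) l → stepsFrom A (q, v) l' →
      lift A x₀ f B v l = lift A x₀ f B v l' → l = l' := by
    intro l
    induction l with
    | nil =>
      intro l' q v _ _ h
      cases l' with
      | nil => rfl
      | cons p l' => obtain ⟨δ, t⟩ := p; simp [lift] at h
    | cons p l ih =>
      obtain ⟨δ, t⟩ := p
      intro l' q v h1 h2 h
      cases l' with
      | nil => simp [lift] at h
      | cons p' l' =>
        obtain ⟨δ', t'⟩ := p'
        obtain ⟨ht, hs, hg, hr⟩ := h1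
        obtain ⟨ht', hs', hg', hr'⟩ := h2
        simp only [lift, List.cons.injEq, Prod.mk.injEq] at h
        obtain ⟨⟨rfl, h3⟩, h4⟩ := h
        obtain rfl := hinj t ht t' ht' _ _ _ _ _ _ h3
        rw [ih l' _ _ hr hr' h4]
  have hsurj : ∀ l' q v, stepsFrom (dfA A x₀ f B) ((q, st A v), v) l' →
      ∃ l, stepsFrom A (q, v) l ∧ lift A x₀ f B v l = l' := by
    intro l'
    induction l' with
    | nil => intro q v _; exact ⟨[], trivial, rfl⟩
    | cons p l' ih =>
      obtain ⟨δ, u⟩ := p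
      rintro q v ⟨hu, hs, hg, hr⟩
      obtain ⟨t, ht, S, S', b, rfl⟩ := (mem_dfA A x₀ f B _).1 hu
      have hs1 : TTrans.src t = q := congrArg Prod.fst hs
      have hs2 : S = st A v := congrArg Prod.snd hs
      subst hs2
      obtain ⟨hg1, rfl, rfl⟩ := (hgrd t ht v δ _ _).1 hg
      obtain ⟨l, hl, hl'⟩ := ih (TTrans.tgt t) (reset (TTrans.rst t) (shift v δ)) hr
      exact ⟨(δ, t) :: l, ⟨ht, hs1, hg1, hl⟩, by rw [lift, hl']⟩
  have hend : ∀ l q v S, (endConfig (((q, S), v)) (lift A x₀ f B v l)).1.1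
      = (endConfig (q, v) l).1 := by
    intro l
    induction l with
    | nil => intro q v S; rfl
    | cons p l ih =>
      obtain ⟨δ, t⟩ := p
      intro q v S
      exact ih _ _ _
  refine ⟨dfA A x₀ f B, ?_, ?_⟩
  · intro u hu φ hφ
    obtain ⟨t, ht, S, S', b, rfl⟩ := (mem_dfA A x₀ f B _).1 hu
    rcases Finset.mem_insert.1 hφ with rfl | h
    · exact tagC_isDiag _ _ _
    · exact (hB t S S' ht).1 φ h
  · refine ⟨Equiv.ofBijective
      (fun r => ⟨lift A x₀ f B (fun _ => 0) r.1, hvalid _ _ _ r.2⟩) ⟨?_, ?_⟩, ?_⟩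
    · intro r r' h
      exact Subtype.ext (hinjl _ _ _ _ r.2 r'.2 (congrArg Subtype.val h))
    · intro r'
      obtain ⟨l, hl, hl'⟩ := hsurj _ _ _ r'.2
      exact ⟨⟨l, hl⟩, Subtype.ext hl'⟩
    · intro r
      have := hend r.1 A.init (fun _ => 0) (st A fun _ => 0)
      show _ ∈ A.acc ↔ (endConfig _ (lift A x₀ f B (fun _ => 0) r.1)).1.1 ∈ A.acc
      rw [← this]
      rfl

end

end DF

theorem stmt10 {Q X : Type} [Fintype Q] [Fintype X] [DecidableEq X] (A : TA Q X) :
    ∃ (Q' : Type) (_ : Fintype Q') (A' : TA Q' X),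
      DiagFree A' ∧
      Nat.card Q' = 2 ^ (diagGuards A).card * Nat.card Q ∧
      ∃ e : A.Run ≃ A'.Run, ∀ r : A.Run, A.Accepting r ↔ A'.Accepting (e r) := by
  classical
  rcases isEmpty_or_nonempty X with hX | ⟨⟨x₀⟩⟩
  · have hno : ∀ φ : Constr X, False := by
      intro φ
      cases φ <;> exact hX.elim ‹X›
    refine ⟨Q, inferInstance, A, fun t _ φ _ => (hno φ).elim, ?_, Equiv.refl _, fun r => Iff.rfl⟩
    have : diagGuards A = ∅ := Finset.eq_empty_of_forall_notMem fun φ _ => hno φ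
    simp [this]
  · obtain ⟨A', h1, h2⟩ := DF.stmt_aux A x₀
    refine ⟨Q × Set {φ // φ ∈ diagGuards A}, Fintype.ofFinite _, A', h1, ?_, h2⟩
    rw [Nat.card_prod, mul_comm]
    congr 1
    rw [Nat.card_eq_fintype_card, Fintype.card_set, Fintype.card_coe]
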